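/- Let Ψ(x) = exp(−1/(1 − x²)) for x ∈ (−1, 1) and Ψ(x) = 0 otherwise (the standard bump function). Then Ψ is infinitely differentiable on ℝ, and there exist absolute constants C₁, C₂ > 0 such that sup_{x∈[−1,1]} |Ψ^{(k)}(x)| ≤ C₁·C₂^k·(k!)² for all k ∈ ℕ. -/

import Mathlib

noncomputable def bump (x : ℝ) : ℝ :=
  if x ∈ Set.Ioo (-1 : ℝ) 1 then Real.exp (-1 / (1 - x ^ 2)) else 0

lemma bump_eq_glue : bump = fun x => expNegInvGlue (1 - x ^ 2) := by
  funext x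
  unfold bump expNegInvGlue
  by_cases h : x ∈ Set.Ioo (-1 : ℝ) 1
  · have : ¬ (1 - x ^ 2 ≤ 0) := by
      obtain ⟨h1, h2⟩ := h
      nlinarith
    rw [if_pos h, if_neg this]
    congr 1
    rw [neg_div, one_div]
  · have : 1 - x ^ 2 ≤ 0 := by
      by_contra h'
      exact h (abs_lt.mp (by rw [← sq_lt_one_iff_abs_lt_one]; linarith))
    rw [if_neg h, if_pos this]

lemma bump_contDiff : ContDiff ℝ (⊤ : ℕ∞) bump := by
  rw [bump_eq_glue]
  exact expNegInvGlue.contDiff.comp (by fun_prop)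

noncomputable def cbump (z : ℂ) : ℂ := Complex.exp (-1 / (1 - z ^ 2))

lemma cbump_analyticAt {z : ℂ} (hz : 1 - z ^ 2 ≠ 0) : AnalyticAt ℂ cbump z := by
  unfold cbump
  fun_prop (disch := assumption)

lemma real_ne {x : ℝ} (hx : x ∈ Set.Ioo (-1 : ℝ) 1) : (1 : ℂ) - (x : ℂ) ^ 2 ≠ 0 := by
  obtain ⟨h1, h2⟩ := hx
  have : 1 - x ^ 2 ≠ 0 := by nlinarith
  exact_mod_cast this

lemma bump_iter (k : ℕ) : ∀ x ∈ Set.Ioo (-1 : ℝ) 1,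
    iteratedDeriv k bump x = (iteratedDeriv k cbump x).re := by
  induction k with
  | zero =>
    intro x hx
    simp only [iteratedDeriv_zero, bump, if_pos hx, cbump]
    rw [← Complex.exp_ofReal_re]
    push_cast
    rfl
  | succ k ih =>
    intro x hx
    rw [iteratedDeriv_succ, iteratedDeriv_succ]
    have hd : DifferentiableAt ℂ (iteratedDeriv k cbump) x := by
      rw [iteratedDeriv_eq_iterate]
      exact ((cbump_analyticAt (real_ne hx)).iterated_deriv k).differentiableAt
    have h2 := hd.hasDerivAt.real_of_complex
    have he : iteratedDeriv k bump =ᶠ[nhds x] fun y : ℝ => (iteratedDeriv k cbump y).re :=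
      Filter.eventually_of_mem (isOpen_Ioo.mem_nhds hx) ih
    rw [he.deriv_eq]
    exact h2.deriv

lemma re_inv_bound {w : ℂ} {a : ℝ} (ha : 0 < a) (h : ‖w - a‖ ≤ a / 2) :
    2 / 9 / a ≤ (w⁻¹).re := by
  have h1 : a / 2 ≤ w.re := by
    have := (abs_le.mp (Complex.abs_re_le_norm (w - a))).1
    simp at this
    linarith
  have h2 : ‖w‖ ≤ 3 / 2 * a := by
    have := norm_add_le (w - a) (a : ℂ)
    rw [sub_add_cancel, Complex.norm_real, Real.norm_of_nonneg ha.le] at this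
    linarith
  have h3 : Complex.normSq w ≤ 9 / 4 * a ^ 2 := by
    rw [Complex.normSq_eq_norm_sq]
    nlinarith [norm_nonneg w]
  have h4 : 0 < Complex.normSq w := by
    rw [Complex.normSq_pos]
    rintro rfl
    simp at h1
    linarith
  rw [Complex.inv_re, div_le_div_iff₀ ha h4]
  nlinarith

lemma ball_bounds {x : ℝ} (hx : x ∈ Set.Ioo (-1 : ℝ) 1) {z : ℂ}
    (hz : ‖z - x‖ ≤ (1 - x ^ 2) / 4) :
    2 / 9 / (1 - x) ≤ ((1 - z)⁻¹).re ∧ 2 / 9 / (1 + x) ≤ ((1 + z)⁻¹).re := by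
  obtain ⟨h1, h2⟩ := hx
  constructor
  · apply re_inv_bound (by linarith)
    have : 1 - z - ((1 - x : ℝ) : ℂ) = -(z - x) := by push_cast; ring
    rw [this, norm_neg]
    nlinarith
  · apply re_inv_bound (by linarith)
    have : 1 + z - ((1 + x : ℝ) : ℂ) = (z - x) := by push_cast; ring
    rw [this]
    nlinarith

lemma ball_ne {x : ℝ} (hx : x ∈ Set.Ioo (-1 : ℝ) 1) {z : ℂ}
    (hz : ‖z - x‖ ≤ (1 - x ^ 2) / 4) : 1 - z ≠ 0 ∧ 1 + z ≠ 0 := by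
  obtain ⟨h1, h2⟩ := ball_bounds hx hz
  have p1 : 0 < 2 / 9 / (1 - x) := div_pos (by norm_num) (by linarith [hx.2])
  have p2 : 0 < 2 / 9 / (1 + x) := div_pos (by norm_num) (by linarith [hx.1])
  constructor
  · intro h
    rw [h] at h1
    simp only [inv_zero, Complex.zero_re] at h1
    linarith
  · intro h
    rw [h] at h2
    simp only [inv_zero, Complex.zero_re] at h2
    linarith

lemma cbump_norm {x : ℝ} (hx : x ∈ Set.Ioo (-1 : ℝ) 1) {z : ℂ}
    (hz : ‖z - x‖ ≤ (1 - x ^ 2) / 4) :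
    ‖cbump z‖ ≤ Real.exp (-(2 / (9 * (1 - x ^ 2)))) := by
  obtain ⟨h1, h2⟩ := ball_bounds hx hz
  obtain ⟨n1, n2⟩ := ball_ne hx hz
  have e : -1 / (1 - z ^ 2) = ((-(1 / 2) : ℝ) : ℂ) * ((1 - z)⁻¹ + (1 + z)⁻¹) := by
    have : 1 - z ^ 2 = (1 - z) * (1 + z) := by ring
    rw [this]
    push_cast
    field_simp
    ring
  rw [cbump, Complex.norm_exp, e, Complex.re_ofReal_mul, Complex.add_re]
  apply Real.exp_le_exp.mpr
  have q1 : 1 - x ≠ 0 := by linarith [hx.2]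
  have q2 : 1 + x ≠ 0 := by linarith [hx.1]
  have e2 : 2 / (9 * (1 - x ^ 2)) = 1 / 2 * (2 / 9 / (1 - x) + 2 / 9 / (1 + x)) := by
    have : 1 - x ^ 2 = (1 - x) * (1 + x) := by ring
    rw [this]
    field_simp
    ring
  rw [e2]
  linarith

lemma bump_bound_Ioo (k : ℕ) (x : ℝ) (hx : x ∈ Set.Ioo (-1 : ℝ) 1) :
    |iteratedDeriv k bump x| ≤ 18 ^ k * (Nat.factorial k : ℝ) ^ 2 := by
  have ht : 0 < 1 - x ^ 2 := by nlinarith [hx.1, hx.2]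
  rw [bump_iter k x hx]
  refine (Complex.abs_re_le_norm _).trans ?_
  have hdo : DifferentiableOn ℂ cbump (Metric.closedBall (x : ℂ) ((1 - x ^ 2) / 4)) := by
    intro z hz
    rw [mem_closedBall_iff_norm] at hz
    obtain ⟨n1, n2⟩ := ball_ne hx hz
    have : 1 - z ^ 2 = (1 - z) * (1 + z) := by ring
    exact (cbump_analyticAt (by rw [this]; exact mul_ne_zero n1 n2)).differentiableAt.differentiableWithinAt
  have hC := Complex.norm_iteratedDeriv_le_of_forall_mem_sphere_norm_le k
    (by positivity : 0 < (1 - x ^ 2) / 4) (hdo.diffContOnCl_ball le_rfl)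
    (fun z hz => cbump_norm hx (by rw [← mem_sphere_iff_norm.mp hz]))
  refine hC.trans ?_
  set y : ℝ := 2 / (9 * (1 - x ^ 2)) with hy
  have hy0 : 0 ≤ y := by positivity
  have hexp := Real.pow_div_factorial_le_exp y hy0 k
  have hf : (0 : ℝ) < Nat.factorial k := by positivity
  rw [div_le_iff₀ hf] at hexp
  have hr : ((1 - x ^ 2) / 4) = (18 * y)⁻¹ := by
    rw [hy]; field_simp; norm_num
  rw [hr, inv_pow, div_inv_eq_mul, mul_pow, Real.exp_neg]
  have hE := Real.exp_pos y
  have : (Real.exp y)⁻¹ * y ^ k ≤ Nat.factorial k := by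
    rw [inv_mul_le_iff₀ hE]; exact hexp
  calc _ = (18 ^ k * (Nat.factorial k : ℝ)) * ((Real.exp y)⁻¹ * y ^ k) := by ring
    _ ≤ (18 ^ k * (Nat.factorial k : ℝ)) * Nat.factorial k := by gcongr
    _ = _ := by ring

/-- The standard bump function is smooth, and its derivatives on [−1,1] satisfy
    a factorial-squared growth bound. -/
theorem bump_smooth_and_deriv_bound :
    ContDiff ℝ (⊤ : ℕ∞) bump
    ∧ ∃ C₁ : ℝ, 0 < C₁ ∧ ∃ C₂ : ℝ, 0 < C₂ ∧
        ∀ k : ℕ, ∀ x ∈ Set.Icc (-1 : ℝ) 1,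
          |iteratedDeriv k bump x| ≤ C₁ * C₂ ^ k * (Nat.factorial k : ℝ) ^ 2 := by
  refine ⟨bump_contDiff, 1, one_pos, 18, by norm_num, fun k x hx => ?_⟩
  have hc : Continuous (iteratedDeriv k bump) :=
    bump_contDiff.continuous_iteratedDeriv k (by exact_mod_cast le_top)
  rw [one_mul]
  rw [← closure_Ioo (by norm_num : (-1 : ℝ) ≠ 1)] at hx
  exact le_on_closure (bump_bound_Ioo k) hc.abs.continuousOn continuousOn_const hx
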